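/- Let d ≥ 1 be an integer, p > 1 a real number, and 1 ≤ m ≤ d. Let v₁, …, v_m be real numbers and V₂(x) := Σ_{j=1}^{m} v_j x_j². Let U : ℝ^d → ℝ be a positive, radially symmetric Schwartz function satisfying ΔU + U^p − U = 0 pointwise, and let g : ℝ^d → ℝ be a Schwartz function satisfying −Δg − p U^{p−1} g + g = −V₂ · U pointwise. Then ∫_{ℝ^d} U g dx = −(1/2) · [ (2p − 6 + dp − d) / (2d(p−1)) ] · (Σ_{j=1}^{m} v_j) · ∫_{ℝ^d} |x|² U² dx. Consequently the power of the narrow lattice soliton U + Ñ² g satisfies ∫(U + Ñ²g)² dx = ∫U² dx − Ñ² [ (2p−6+dp−d)/(2d(p−1)) ∫|x|²U² dx ] Σ_j v_j + Ñ⁴ ∫g² dx. -/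

import Mathlib

open MeasureTheory Real Filter Topology Asymptotics

/-- Partial derivative of `f` in the `j`-th coordinate direction. -/
noncomputable def pd {d : ℕ} {E : Type*} [NormedAddCommGroup E] [NormedSpace ℝ E]
    (f : EuclideanSpace ℝ (Fin d) → E) (j : Fin d) (x : EuclideanSpace ℝ (Fin d)) : E :=
  fderiv ℝ f x (EuclideanSpace.single j 1)

/-- Euclidean Laplacian: sum of second partial derivatives. -/
noncomputable def lap {d : ℕ} {E : Type*} [NormedAddCommGroup E] [NormedSpace ℝ E]
    (f : EuclideanSpace ℝ (Fin d) → E) (x : EuclideanSpace ℝ (Fin d)) : E :=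
  ∑ j, pd (pd f j) j x

/-!
Differentiating the rescaled solitons `ω ^ (1 / (p - 1)) U (√ω x)` at `ω = 1` produces the function
`h = U / (p - 1) + (x · ∇U) / 2`, which satisfies `L₊ h = -U`; this rests on the commutator identity
`[Δ, x · ∇] = 2 Δ`. Since `L₊` is symmetric and `L₊ g = -V₂ U`,
`∫ U g = -∫ (L₊ h) g = -∫ h (L₊ g) = ∫ h V₂ U`. The vector field `x` has divergence `d` and `V₂` is
homogeneous of degree 2, so integrating `x · ∇(V₂ U ^ 2)` by parts turns the last integral into a
multiple of `∫ V₂ U ^ 2`. As `U` is radial, each moment `∫ x_i ^ 2 U ^ 2` is the `d`-th part of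
`∫ |x| ^ 2 U ^ 2`.
-/

open scoped SchwartzMap LineDeriv Laplacian

section EulerOperator

variable {E F : Type*} [NormedAddCommGroup E] [NormedSpace ℝ E]
  [NormedAddCommGroup F] [NormedSpace ℝ F]

theorem fderiv_apply_self_of_homogeneous {V : E → F} {k : ℕ}
    (hV : ∀ (t : ℝ) (x : E), V (t • x) = t ^ k • V x) {x : E} (hx : DifferentiableAt ℝ V x) :
    fderiv ℝ V x x = (k : ℝ) • V x := by
  have hline : HasDerivAt (fun t : ℝ ↦ t • x) x 1 := by
    simpa using (hasDerivAt_id (1 : ℝ)).smul_const x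
  have hchain : HasDerivAt (fun t : ℝ ↦ V (t • x)) (fderiv ℝ V x x) 1 :=
    HasFDerivAt.comp_hasDerivAt_of_eq 1 hx.hasFDerivAt hline (one_smul ℝ x).symm
  have hpow : HasDerivAt (fun t : ℝ ↦ V (t • x)) ((k : ℝ) • V x) 1 := by
    simpa only [hV, one_pow, mul_one] using (hasDerivAt_pow k (1 : ℝ)).smul_const (V x)
  exact hchain.unique hpow

/-- The Euler operator `f ↦ x · ∇f`, the generator of dilations, on Schwartz functions. -/
noncomputable def eulerOp : 𝓢(E, F) →L[ℝ] 𝓢(E, F) :=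
  SchwartzMap.bilinLeftCLM (ContinuousLinearMap.id ℝ (E →L[ℝ] F)) .id' ∘L
    SchwartzMap.fderivCLM ℝ E F

theorem eulerOp_apply (f : 𝓢(E, F)) (x : E) : eulerOp f x = fderiv ℝ f x x := rfl

theorem lineDerivOp_eulerOp (v : E) (f : 𝓢(E, F)) :
    ∂_{v} (eulerOp f) = ∂_{v} f + eulerOp (∂_{v} f) := by
  ext x
  have hf' : HasFDerivAt (fderiv ℝ f) (fderiv ℝ (fderiv ℝ f) x) x :=
    (SchwartzMap.fderivCLM ℝ E F f).hasFDerivAt x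
  have hfv : HasFDerivAt (fun y ↦ fderiv ℝ f y v) ((fderiv ℝ (fderiv ℝ f) x).flip v) x := by
    simpa using hf'.clm_apply (hasFDerivAt_const v x)
  have hEuler : HasFDerivAt (fun y ↦ fderiv ℝ f y y)
      (fderiv ℝ f x + (fderiv ℝ (fderiv ℝ f) x).flip x) x := by
    simpa using hf'.clm_apply (hasFDerivAt_id x)
  have hsymm : IsSymmSndFDerivAt ℝ f x := (f.smooth 2).contDiffAt.isSymmSndFDerivAt (by simp)
  calc ∂_{v} (eulerOp f) x
      = fderiv ℝ f x v + fderiv ℝ (fderiv ℝ f) x v x := congr($hEuler.fderiv v)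
    _ = fderiv ℝ f x v + fderiv ℝ (fderiv ℝ f) x x v := by rw [hsymm.eq v x]
    _ = (∂_{v} f + eulerOp (∂_{v} f)) x := congr(fderiv ℝ f x v + $hfv.fderiv x).symm

end EulerOperator

section Integration

variable {E F : Type*} [NormedAddCommGroup E] [NormedSpace ℝ E] [FiniteDimensional ℝ E]
  [MeasurableSpace E] [BorelSpace E] [NormedAddCommGroup F] [NormedSpace ℝ F]
  (μ : Measure E) [μ.IsAddHaarMeasure]

theorem integral_eulerOp (f : 𝓢(E, F)) :
    ∫ x, eulerOp f x ∂μ = -(Module.finrank ℝ E : ℝ) • ∫ x, f x ∂μ := by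
  let b := Module.finBasis ℝ E
  let c i : E →L[ℝ] ℝ := LinearMap.toContinuousLinearMap (b.coord i)
  have hintegrable (i) (h : 𝓢(E, F)) : Integrable (fun x ↦ c i x • h x) μ := by
    simpa only [SchwartzMap.smulLeftCLM_apply (c i).hasTemperateGrowth] using
      (SchwartzMap.smulLeftCLM F (c i) h).integrable (μ := μ)
  have hexpand (x : E) : eulerOp f x = ∑ i, c i x • ∂_{b i} f x := by
    conv_lhs => rw [eulerOp_apply, ← b.sum_repr x, map_sum]
    simp [c, b.sum_repr x, SchwartzMap.lineDerivOp_apply_eq_fderiv]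
  have hparts (i) : ∫ x, c i x • ∂_{b i} f x ∂μ = -∫ x, f x ∂μ := by
    have hci (x : E) : fderiv ℝ (c i) x (b i) = 1 := by
      rw [(c i).fderiv]
      simp [c]
    have hibp := integral_smul_fderiv_eq_neg_fderiv_smul_of_integrable
      (by simpa only [hci, one_smul] using f.integrable (μ := μ))
      (hintegrable i (∂_{b i} f)) (hintegrable i f)
      (fun _ _ ↦ (c i).differentiableAt) (fun _ _ ↦ f.differentiableAt)
    simpa only [hci, one_smul, SchwartzMap.lineDerivOp_apply_eq_fderiv] using hibp
  simp only [hexpand]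
  rw [integral_finsetSum _ fun i _ ↦ hintegrable i (∂_{b i} f)]
  simp [hparts, ← Nat.cast_smul_eq_nsmul ℝ]

theorem integrable_temperateGrowth_mul_mul {V : E → ℝ} (hV : V.HasTemperateGrowth)
    (f g : 𝓢(E, ℝ)) : Integrable (fun x ↦ V x * f x * g x) μ := by
  simpa [SchwartzMap.pairing_apply, SchwartzMap.smulLeftCLM_apply hV] using
    (SchwartzMap.pairing (.mul ℝ ℝ) (SchwartzMap.smulLeftCLM ℝ V f) g).integrable (μ := μ)

theorem integral_homogeneous_mul_mul_eulerOp {V : E → ℝ} (hV : V.HasTemperateGrowth) {k : ℕ}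
    (hVk : ∀ (t : ℝ) (x : E), V (t • x) = t ^ k * V x) (f : 𝓢(E, ℝ)) :
    ∫ x, V x * f x * eulerOp f x ∂μ
      = -((Module.finrank ℝ E + k) / 2) * ∫ x, V x * f x ^ 2 ∂μ := by
  let w : 𝓢(E, ℝ) := SchwartzMap.smulLeftCLM ℝ V (SchwartzMap.pairing (.mul ℝ ℝ) f f)
  have hw : ⇑w = fun x ↦ V x * f x ^ 2 := by ext x; simp [w, hV, pow_two]
  have hEuler (x : E) : eulerOp w x = k * w x + 2 * (V x * f x * eulerOp f x) := by
    have hVx : DifferentiableAt ℝ V x := hV.1.differentiable (by simp) x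
    rw [eulerOp_apply, hw, (hVx.hasFDerivAt.fun_mul ((f.hasFDerivAt x).pow 2)).fderiv]
    simp only [add_apply, smul_apply, smul_eq_mul, nsmul_eq_mul, Nat.cast_ofNat,
      Nat.add_one_sub_one, pow_one, fderiv_apply_self_of_homogeneous hVk hVx, eulerOp_apply]
    ring
  have hdivergence := integral_eulerOp μ w
  simp only [hEuler] at hdivergence
  rw [integral_add (w.integrable.const_mul _)
    ((integrable_temperateGrowth_mul_mul μ hV f (eulerOp f)).const_mul _),
    integral_const_mul, integral_const_mul, hw, smul_eq_mul] at hdivergence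
  linear_combination hdivergence / 2

end Integration

theorem integral_add_const_mul_sq {α : Type*} [MeasurableSpace α] {μ : Measure α} {f g : α → ℝ}
    (hf : MemLp f 2 μ) (hg : MemLp g 2 μ) (c : ℝ) :
    ∫ x, (f x + c * g x) ^ 2 ∂μ
      = ∫ x, f x ^ 2 ∂μ + 2 * c * ∫ x, f x * g x ∂μ + c ^ 2 * ∫ x, g x ^ 2 ∂μ := by
  have hfg : Integrable (fun x ↦ f x * g x) μ := hf.integrable_mul hg
  have hexpand (x : α) :
      (f x + c * g x) ^ 2 = f x ^ 2 + 2 * c * (f x * g x) + c ^ 2 * g x ^ 2 := by ring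
  simp only [hexpand]
  rw [integral_add (hf.integrable_sq.fun_add (hfg.const_mul _)) (hg.integrable_sq.const_mul _),
    integral_add hf.integrable_sq (hfg.const_mul _), integral_const_mul, integral_const_mul]

section RadialMoments

variable {ι : Type*} [Fintype ι] {w : EuclideanSpace ℝ ι → ℝ} {φ : ℝ → ℝ}

theorem card_mul_integral_apply_sq_mul_of_radial (hw : ∀ x, w x = φ ‖x‖)
    (hint : ∀ i, Integrable fun x : EuclideanSpace ℝ ι ↦ x i ^ 2 * w x) (i : ι) :
    Fintype.card ι * ∫ x, x i ^ 2 * w x = ∫ x, ‖x‖ ^ 2 * w x := by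
  classical
  have hswap (j : ι) : ∫ x, x j ^ 2 * w x = ∫ x, x i ^ 2 * w x := by
    let σ := LinearIsometryEquiv.piLpCongrLeft 2 ℝ ℝ (Equiv.swap i j)
    rw [← MeasureTheory.integral_comp σ]
    simp [σ, hw, LinearIsometryEquiv.piLpCongrLeft_apply]
  simp only [EuclideanSpace.real_norm_sq_eq, Finset.sum_mul]
  rw [integral_finsetSum _ fun j _ ↦ hint j]
  simp [hswap]

theorem integral_sum_mul_apply_sq_mul_of_radial {κ : Type*} [Fintype κ] (hw : ∀ x, w x = φ ‖x‖)
    (hint : ∀ i, Integrable fun x : EuclideanSpace ℝ ι ↦ x i ^ 2 * w x) (v : κ → ℝ) (e : κ → ι) :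
    ∫ x, (∑ j, v j * x (e j) ^ 2) * w x
      = (∑ j, v j) / Fintype.card ι * ∫ x, ‖x‖ ^ 2 * w x := by
  have hmoment (i : ι) :
      ∫ x, x i ^ 2 * w x = (∫ x, ‖x‖ ^ 2 * w x) / Fintype.card ι := by
    have : Nonempty ι := ⟨i⟩
    rw [eq_div_iff (by simp), mul_comm, card_mul_integral_apply_sq_mul_of_radial hw hint]
  simp only [Finset.sum_mul, mul_assoc]
  rw [integral_finsetSum _ fun j _ ↦ (hint (e j)).const_mul (v j)]
  simp only [integral_const_mul, hmoment]
  rw [← Finset.sum_mul]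
  ring

end RadialMoments

section LinearizedOperator

variable {E F : Type*} [NormedAddCommGroup E] [InnerProductSpace ℝ E] [FiniteDimensional ℝ E]
  [NormedAddCommGroup F] [NormedSpace ℝ F]

theorem laplacian_eulerOp (f : 𝓢(E, F)) : Δ (eulerOp f) = (2 : ℝ) • Δ f + eulerOp (Δ f) := by
  simp only [SchwartzMap.laplacian_eq_sum (stdOrthonormalBasis ℝ E), lineDerivOp_eulerOp,
    LineDeriv.lineDerivOp_add, map_sum, Finset.sum_add_distrib, two_smul, add_assoc]

/-- The Schrödinger operator `-Δ + W` with potential `W`, acting on Schwartz functions. Its values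
are plain functions because `W` is arbitrary. -/
noncomputable def schrodingerOp (W : E → ℝ) (f : 𝓢(E, ℝ)) (x : E) : ℝ :=
  -(Δ f) x + W x * f x

theorem integral_mul_schrodingerOp [MeasurableSpace E] [BorelSpace E] (μ : Measure E)
    [μ.IsAddHaarMeasure] (W : E → ℝ) (f g : 𝓢(E, ℝ)) :
    ∫ x, f x * schrodingerOp W g x ∂μ = ∫ x, schrodingerOp W f x * g x ∂μ := by
  have hint₁ : Integrable (fun x ↦ (Δ f) x * g x) μ :=
    (SchwartzMap.pairing (.mul ℝ ℝ) (Δ f) g).integrable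
  have hint₂ : Integrable (fun x ↦ f x * (Δ g) x) μ :=
    (SchwartzMap.pairing (.mul ℝ ℝ) f (Δ g)).integrable
  have hdiff : Integrable (fun x ↦ (Δ f) x * g x - f x * (Δ g) x) μ := hint₁.sub hint₂
  have hsplit (x : E) : f x * schrodingerOp W g x
      = ((Δ f) x * g x - f x * (Δ g) x) + schrodingerOp W f x * g x := by
    simp only [schrodingerOp]
    ring
  simp only [hsplit]
  by_cases hW : Integrable (fun x ↦ schrodingerOp W f x * g x) μ
  · rw [integral_add hdiff hW, integral_sub hint₁ hint₂,
      SchwartzMap.integral_mul_laplacian_right_eq_left, sub_self, zero_add]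
  · rw [integral_undef hW, integral_undef]
    rwa [integrable_add_iff_integrable_right' hdiff]

/-- The operator `L₊ = -Δ + 1 - p U ^ (p - 1)`, the linearization at `U` of the soliton equation
written as `-ΔU + U - U ^ p = 0`. -/
noncomputable def linearizedOp (p : ℝ) (U : E → ℝ) : 𝓢(E, ℝ) → E → ℝ :=
  schrodingerOp fun x ↦ 1 - p * U x ^ (p - 1)

/-- The derivative at `ω = 1` of the rescaled solitons `ω ^ (1 / (p - 1)) U (√ω x)`, which solve
`ΔU + U ^ p = ω U`. -/
noncomputable def scalingGenerator (p : ℝ) (U : 𝓢(E, ℝ)) : 𝓢(E, ℝ) :=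
  (p - 1)⁻¹ • U + (2 : ℝ)⁻¹ • eulerOp U

variable {p : ℝ} {U : 𝓢(E, ℝ)}

theorem eulerOp_laplacian_of_soliton (hUpos : ∀ x, 0 < U x)
    (hU : ∀ x, (Δ U) x + U x ^ p - U x = 0) (x : E) :
    eulerOp (Δ U) x = (1 - p * U x ^ (p - 1)) * eulerOp U x := by
  have hlap : ⇑(Δ U : 𝓢(E, ℝ)) = fun y ↦ U y - U y ^ p := by
    ext y
    linear_combination hU y
  have hderiv : HasFDerivAt (Δ U : 𝓢(E, ℝ))
      (fderiv ℝ U x - (p * U x ^ (p - 1)) • fderiv ℝ U x) x :=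
    hlap ▸ (U.hasFDerivAt x).sub ((U.hasFDerivAt x).rpow_const (.inl (hUpos x).ne'))
  rw [eulerOp_apply, hderiv.fderiv, eulerOp_apply, sub_apply, smul_apply, smul_eq_mul]
  ring

theorem linearizedOp_scalingGenerator (hp : p ≠ 1) (hUpos : ∀ x, 0 < U x)
    (hU : ∀ x, (Δ U) x + U x ^ p - U x = 0) (x : E) :
    linearizedOp p U (scalingGenerator p U) x = -U x := by
  have hlap : (Δ (scalingGenerator p U)) x
      = (p - 1)⁻¹ * (Δ U) x + (Δ U) x + 2⁻¹ * eulerOp (Δ U) x := by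
    rw [scalingGenerator, ← SchwartzMap.laplacianCLM_eq', map_add, map_smul, map_smul,
      SchwartzMap.laplacianCLM_eq', SchwartzMap.laplacianCLM_eq', laplacian_eulerOp]
    simp only [add_apply, smul_apply, smul_eq_mul]
    ring
  have hpow : U x ^ p = U x ^ (p - 1) * U x := by
    rw [← Real.rpow_add_one (hUpos x).ne', sub_add_cancel]
  have hUx : (Δ U) x = U x - U x ^ (p - 1) * U x := by
    linear_combination hU x - hpow
  have hp' : p - 1 ≠ 0 := sub_ne_zero.mpr hp
  rw [linearizedOp, schrodingerOp, hlap, eulerOp_laplacian_of_soliton hUpos hU, hUx]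
  simp only [scalingGenerator, add_apply, smul_apply, smul_eq_mul]
  field_simp
  ring

theorem integral_mul_of_linearizedOp_eq_neg_mul [MeasurableSpace E] [BorelSpace E] (μ : Measure E)
    [μ.IsAddHaarMeasure] (hp : p ≠ 1) (hUpos : ∀ x, 0 < U x)
    (hU : ∀ x, (Δ U) x + U x ^ p - U x = 0) {V : E → ℝ} (hV : V.HasTemperateGrowth) {k : ℕ}
    (hVk : ∀ (t : ℝ) (x : E), V (t • x) = t ^ k * V x) {g : 𝓢(E, ℝ)}
    (hg : ∀ x, linearizedOp p U g x = -(V x * U x)) :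
    ∫ x, U x * g x ∂μ
      = ((p - 1)⁻¹ - (Module.finrank ℝ E + k) / 4) * ∫ x, V x * U x ^ 2 ∂μ := by
  have hVU : Integrable (fun x ↦ V x * U x ^ 2) μ := by
    simpa only [pow_two, mul_assoc] using integrable_temperateGrowth_mul_mul μ hV U U
  have hVEU := integrable_temperateGrowth_mul_mul μ hV U (eulerOp U)
  calc ∫ x, U x * g x ∂μ
      = -∫ x, linearizedOp p U (scalingGenerator p U) x * g x ∂μ := by
        simp [linearizedOp_scalingGenerator hp hUpos hU, integral_neg]
    _ = -∫ x, scalingGenerator p U x * linearizedOp p U g x ∂μ := by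
        rw [linearizedOp, integral_mul_schrodingerOp]
    _ = ∫ x, ((p - 1)⁻¹ * (V x * U x ^ 2) + 2⁻¹ * (V x * U x * eulerOp U x)) ∂μ := by
        rw [← integral_neg]
        refine integral_congr_ae (.of_forall fun x ↦ ?_)
        simp only [hg, scalingGenerator, add_apply, smul_apply, smul_eq_mul]
        ring
    _ = (p - 1)⁻¹ * ∫ x, V x * U x ^ 2 ∂μ + 2⁻¹ * ∫ x, V x * U x * eulerOp U x ∂μ := by
        rw [integral_add (hVU.const_mul _) (hVEU.const_mul _), integral_const_mul,
          integral_const_mul]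
    _ = ((p - 1)⁻¹ - (Module.finrank ℝ E + k) / 4) * ∫ x, V x * U x ^ 2 ∂μ := by
        rw [integral_homogeneous_mul_mul_eulerOp μ hV hVk]
        ring

end LinearizedOperator

theorem lap_eq_laplacian {d : ℕ} {F : Type*} [NormedAddCommGroup F] [NormedSpace ℝ F]
    (f : 𝓢(EuclideanSpace ℝ (Fin d), F)) (x : EuclideanSpace ℝ (Fin d)) : lap f x = (Δ f) x := by
  rw [SchwartzMap.laplacian_eq_sum (EuclideanSpace.basisFun (Fin d) ℝ)]
  simp only [EuclideanSpace.basisFun_apply, sum_apply]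
  rfl

/-- the O(N²) coefficient in the power expansion of a narrow lattice
soliton: `∫Ug = −(1/2) I Σ v_j` with `I = [(2p−6+dp−d)/(2d(p−1))] ∫|x|²U²`, and the
resulting exact expansion of the power of `U + N²g`. -/
theorem power_expansion_narrow_soliton (d m : ℕ) (hd : 1 ≤ d) (hm : 1 ≤ m)
    (hmd : m ≤ d) (p : ℝ) (hp : 1 < p)
    (v : Fin m → ℝ)
    (U g : SchwartzMap (EuclideanSpace ℝ (Fin d)) ℝ)
    (φ : ℝ → ℝ) (hrad : ∀ x, U x = φ ‖x‖)
    (hUpos : ∀ x, 0 < U x)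
    (hUeq : ∀ x, lap (⇑U) x + U x ^ p - U x = 0)
    (hgeq : ∀ x : EuclideanSpace ℝ (Fin d),
      -(lap (⇑g) x) - p * U x ^ (p - 1) * g x + g x
        = -((∑ j : Fin m, v j * (x (Fin.castLE hmd j)) ^ 2) * U x)) :
    (∫ x : EuclideanSpace ℝ (Fin d), U x * g x
      = -(1 / 2) * ((2 * p - 6 + (d : ℝ) * p - (d : ℝ)) / (2 * (d : ℝ) * (p - 1)))
          * (∑ j : Fin m, v j)
          * ∫ x : EuclideanSpace ℝ (Fin d), ‖x‖ ^ 2 * (U x) ^ 2) ∧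
    ∀ N : ℝ,
      ∫ x : EuclideanSpace ℝ (Fin d), (U x + N ^ 2 * g x) ^ 2
        = (∫ x : EuclideanSpace ℝ (Fin d), (U x) ^ 2)
          - N ^ 2 * (((2 * p - 6 + (d : ℝ) * p - (d : ℝ)) / (2 * (d : ℝ) * (p - 1)))
              * ∫ x : EuclideanSpace ℝ (Fin d), ‖x‖ ^ 2 * (U x) ^ 2)
            * (∑ j : Fin m, v j)
          + N ^ 4 * ∫ x : EuclideanSpace ℝ (Fin d), (g x) ^ 2 := by
  let V : EuclideanSpace ℝ (Fin d) → ℝ := fun x ↦ ∑ j, v j * x (Fin.castLE hmd j) ^ 2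
  have hcoord (i) : (fun x : EuclideanSpace ℝ (Fin d) ↦ x i).HasTemperateGrowth :=
    (EuclideanSpace.proj i : _ →L[ℝ] ℝ).hasTemperateGrowth
  have hV : V.HasTemperateGrowth := by fun_prop
  have hVhom (t : ℝ) (x) : V (t • x) = t ^ 2 * V x := by
    simp [V, mul_pow, Finset.mul_sum, mul_left_comm]
  have hsoliton (x) : (Δ U) x + U x ^ p - U x = 0 := lap_eq_laplacian U x ▸ hUeq x
  have hlinearized (x) : linearizedOp p U g x = -(V x * U x) := by
    rw [← hgeq x, lap_eq_laplacian, linearizedOp, schrodingerOp]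
    ring
  have hcoordU (i) : Integrable fun x ↦ x i ^ 2 * U x ^ 2 := by
    simpa only [pow_two, mul_assoc] using
      integrable_temperateGrowth_mul_mul volume ((hcoord i).fun_pow 2) U U
  have hmoments : ∫ x, V x * U x ^ 2 = (∑ j, v j) / d * ∫ x, ‖x‖ ^ 2 * U x ^ 2 := by
    simpa using integral_sum_mul_apply_sq_mul_of_radial (φ := fun r ↦ φ r ^ 2)
      (fun x ↦ congrArg (· ^ 2) (hrad x)) hcoordU v (Fin.castLE hmd)
  have hUg : ∫ x, U x * g x = -(1 / 2) * ((2 * p - 6 + d * p - d) / (2 * d * (p - 1)))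
      * (∑ j, v j) * ∫ x, ‖x‖ ^ 2 * U x ^ 2 := by
    rw [integral_mul_of_linearizedOp_eq_neg_mul volume hp.ne' hUpos hsoliton hV hVhom hlinearized,
      hmoments, finrank_euclideanSpace_fin]
    field [sub_ne_zero.mpr hp.ne', Nat.cast_ne_zero.mpr (Nat.pos_iff_ne_zero.mp hd)]
  refine ⟨hUg, fun N ↦ ?_⟩
  rw [integral_add_const_mul_sq (U.memLp 2 volume) (g.memLp 2 volume), hUg]
  ring
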